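/- Fix t > 0 and (x̂, â) ∈ ℝ². For every 1-Lipschitz function f : ℝ → ℝ with p_{x̂,â}(t,y) ≤ f(y) ≤ p_{x̂,â}(0,y) for all y ∈ ℝ, the excess entropy satisfies I(f ∥ p_{x̂,â}(t)) ≥ 0, and equality holds if and only if f(y) = p_{x̂,â}(t,y) for all y ∈ ℝ. -/

import Mathlib

open MeasureTheory

/-- The (shifted) parabola `p(t,x)`: for `t > 0`, `p(t,x) = -t/2 - x²/(2t)` when `|x| ≤ t`
and `p(t,x) = -|x|` otherwise; also `p(0,x) = -|x|`. -/
noncomputable def parab (t x : ℝ) : ℝ :=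
  if 0 < t ∧ |x| ≤ t then -t / 2 - x ^ 2 / (2 * t) else -|x|

/-- The shifted parabola `p_{x̂,â}(t,x) = p(t, x - x̂) + â`. -/
noncomputable def parabXA (xh ah t x : ℝ) : ℝ :=
  parab t (x - xh) + ah

/-- The Bernoulli entropy `H(u) = ((1+u)/2)·log(1+u) + ((1-u)/2)·log(1-u)`
(with `0 · log 0 = 0`, as `Real.log 0 = 0`). -/
noncomputable def Hber (u : ℝ) : ℝ :=
  (1 + u) / 2 * Real.log (1 + u) + (1 - u) / 2 * Real.log (1 - u)

/-- The excess entropy `I(f ∥ p_{x̂,â}(t)) = ∫ ( H(f') - H(∂ₓ p_{x̂,â}(t,·)) )`. -/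
noncomputable def excessEntropy (xh ah t : ℝ) (f : ℝ → ℝ) : ℝ :=
  ∫ y : ℝ, (Hber (deriv f y) - Hber (deriv (parabXA xh ah t) y))


/-!
Convexity of `H` on `[-1, 1]` and `H' = artanh` on `(-1, 1)` give
`H(f') - H(p') ≥ artanh(p') (f' - p')` wherever `|p'| < 1`. The gap `f - p` is nonnegative and
vanishes at the endpoints `x̂ ± t`, so integrating by parts turns the right-hand side into
`∫ -(artanh ∘ p')' (f - p)`. Since `artanh' ≥ 1` and `p'' = -1/t`, this is at least
`t⁻¹ ∫ (f - p)`, which bounds the excess entropy from below and vanishes only when `f = p`.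

The slope of the parabola reaches `±1` at the endpoints, where `artanh` blows up. Applying the
argument to `r f` and `r p` with `0 < r < 1` avoids this, and `r → 1` is harmless because `H` is
bounded and continuous on `[-1, 1]`.
-/

open Set intervalIntegral
open scoped Topology Interval

theorem add_mul_sub_le_of_convexOn {S : Set ℝ} {φ : ℝ → ℝ} {u v d : ℝ} (hφ : ConvexOn ℝ S φ)
    (hu : u ∈ S) (hv : v ∈ S) (hd : HasDerivAt φ d u) : φ u + d * (v - u) ≤ φ v := by
  rcases lt_trichotomy u v with huv | rfl | hvu
  · have h := hφ.le_slope_of_hasDerivAt hu hv huv hd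
    rw [slope_def_field, le_div_iff₀ (sub_pos.2 huv)] at h
    linarith
  · simp
  · have h := hφ.slope_le_of_hasDerivAt hv hu hvu hd
    rw [slope_def_field, div_le_iff₀ (sub_pos.2 hvu)] at h
    linarith

theorem Hber_eq_log_two_sub_binEntropy (u : ℝ) :
    Hber u = Real.log 2 - Real.binEntropy ((1 + u) / 2) := by
  have mul_log_half (x : ℝ) : x / 2 * Real.log (x / 2) = x / 2 * (Real.log x - Real.log 2) := by
    rcases eq_or_ne x 0 with rfl | hx
    · simp
    · rw [Real.log_div hx two_ne_zero]
  rw [Hber, Real.binEntropy_eq_negMulLog_add_negMulLog_one_sub, Real.negMulLog, Real.negMulLog,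
    show 1 - (1 + u) / 2 = (1 - u) / 2 by ring]
  linarith [mul_log_half (1 + u), mul_log_half (1 - u)]

theorem continuous_Hber : Continuous Hber := by
  rw [funext Hber_eq_log_two_sub_binEntropy]
  fun_prop

theorem convexOn_Hber : ConvexOn ℝ (Icc (-1) 1) Hber := by
  refine ⟨convex_Icc _ _, fun u hu v hv a b ha hb hab ↦ ?_⟩
  have half_mem {x : ℝ} (hx : x ∈ Icc (-1) 1) : (1 + x) / 2 ∈ Icc (0 : ℝ) 1 :=
    ⟨by linarith [hx.1], by linarith [hx.2]⟩
  have h := Real.strictConcave_binEntropy.concaveOn.2 (half_mem hu) (half_mem hv) ha hb hab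
  have hmid : (1 + (a * u + b * v)) / 2 = a * ((1 + u) / 2) + b * ((1 + v) / 2) := by
    linear_combination -hab / 2
  simp only [Hber_eq_log_two_sub_binEntropy, smul_eq_mul, hmid] at h ⊢
  linear_combination h - Real.log 2 * hab

theorem hasDerivAt_Hber {u : ℝ} (hu : u ∈ Ioo (-1) 1) : HasDerivAt Hber (Real.artanh u) u := by
  have hplus : 0 < 1 + u := by linarith [hu.1]
  have hminus : 0 < 1 - u := by linarith [hu.2]
  have hhalf : HasDerivAt (fun x : ℝ ↦ (1 + x) / 2) (1 / 2) u :=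
    ((hasDerivAt_id u).const_add 1).div_const 2
  have hent := Real.hasDerivAt_binEntropy (p := (1 + u) / 2) (by linarith) (by linarith)
  rw [funext Hber_eq_log_two_sub_binEntropy]
  refine ((hent.comp u hhalf).const_sub _).congr_deriv ?_
  rw [Real.artanh_eq_half_log (Ioo_subset_Icc_self hu), show 1 - (1 + u) / 2 = (1 - u) / 2 by ring,
    Real.log_div hplus.ne' two_ne_zero, Real.log_div hminus.ne' two_ne_zero,
    Real.log_div hplus.ne' hminus.ne']
  ring

theorem eqOn_artanh_half_log_sub :
    EqOn Real.artanh (fun x ↦ (Real.log (1 + x) - Real.log (1 - x)) / 2) (Ioo (-1) 1) := by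
  intro x hx
  have hplus : 1 + x ≠ 0 := by linarith [hx.1]
  have hminus : 1 - x ≠ 0 := by linarith [hx.2]
  rw [Real.artanh_eq_half_log (Ioo_subset_Icc_self hx), Real.log_div hplus hminus]
  ring

theorem contDiffOn_artanh : ContDiffOn ℝ 1 Real.artanh (Ioo (-1) 1) := by
  refine ContDiffOn.congr ?_ eqOn_artanh_half_log_sub
  refine ((ContDiffOn.log (by fun_prop) fun x hx ↦ ?_).sub
    (ContDiffOn.log (by fun_prop) fun x hx ↦ ?_)).div_const 2
  · linarith [hx.1]
  · linarith [hx.2]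

theorem hasDerivAt_artanh {u : ℝ} (hu : u ∈ Ioo (-1) 1) :
    HasDerivAt Real.artanh (1 - u ^ 2)⁻¹ u := by
  have hplus : 1 + u ≠ 0 := by linarith [hu.1]
  have hminus : 1 - u ≠ 0 := by linarith [hu.2]
  have h := ((((hasDerivAt_id u).const_add 1).log hplus).sub
    (((hasDerivAt_id u).const_sub 1).log hminus)).div_const 2
  refine (h.congr_deriv ?_).congr_of_eventuallyEq
    (eqOn_artanh_half_log_sub.eventuallyEq_of_mem (isOpen_Ioo.mem_nhds hu))
  rw [show 1 - u ^ 2 = (1 + u) * (1 - u) by ring]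
  simp only [id]
  field_simp
  ring

section IntervalIntegral

variable {a b : ℝ}

theorem intervalIntegrable_comp_of_bounded {φ g : ℝ → ℝ} {M : ℝ} (hφ : Continuous φ)
    (hg : Measurable g) (hM : ∀ y ∈ Ι a b, |g y| ≤ M) :
    IntervalIntegrable (fun y ↦ φ (g y)) volume a b := by
  obtain ⟨C, hC⟩ := isCompact_Icc.exists_bound_of_continuousOn (hφ.continuousOn (s := Icc (-M) M))
  refine (intervalIntegrable_const (c := C)).mono_fun'
    (hφ.measurable.comp hg).aestronglyMeasurable ?_
  filter_upwards [ae_restrict_mem measurableSet_uIoc] with y hy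
  exact hC _ (abs_le.1 (hM y hy))

theorem continuous_intervalIntegral_comp_mul {φ g : ℝ → ℝ} {M : ℝ} (hφ : Continuous φ)
    (hg : Measurable g) (hM : ∀ y ∈ Ι a b, |g y| ≤ M) :
    Continuous fun r ↦ ∫ y in a..b, φ (r * g y) := by
  refine continuous_iff_continuousAt.2 fun r₀ ↦ ?_
  obtain ⟨C, hC⟩ := ((isCompact_closedBall r₀ 1).prod
    (isCompact_Icc (a := -M) (b := M))).exists_bound_of_continuousOn
      (f := fun z ↦ φ (z.1 * z.2)) (by fun_prop)
  refine continuousAt_of_dominated_interval (bound := fun _ ↦ C)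
    (.of_forall fun r ↦ (hφ.measurable.comp (hg.const_mul r)).aestronglyMeasurable) ?_
    intervalIntegrable_const (.of_forall fun y _ ↦ by fun_prop)
  filter_upwards [Metric.closedBall_mem_nhds r₀ one_pos] with r hr
  exact .of_forall fun y hy ↦ hC (r, g y) ⟨hr, abs_le.1 (hM y hy)⟩

theorem mul_integral_le_integral_mul_deriv {A w : ℝ → ℝ} {c : ℝ} (hab : a ≤ b)
    (hA : AbsolutelyContinuousOnInterval A a b) (hw : AbsolutelyContinuousOnInterval w a b)
    (hA' : ∀ y ∈ Ioo a b, deriv A y ≤ -c) (hw_nonneg : ∀ y ∈ Ioo a b, 0 ≤ w y)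
    (hwa : w a = 0) (hwb : w b = 0) :
    c * ∫ y in a..b, w y ≤ ∫ y in a..b, A y * deriv w y := by
  rw [hA.integral_mul_deriv_eq_deriv_mul hw, hwa, hwb, mul_zero, mul_zero, sub_self, zero_sub,
    ← intervalIntegral.integral_neg, ← intervalIntegral.integral_const_mul]
  refine integral_mono_on_of_le_Ioo hab (hw.continuousOn.intervalIntegrable.const_mul c)
    (hA.intervalIntegrable_deriv.mul_continuousOn hw.continuousOn).neg fun y hy ↦ ?_
  rw [← neg_mul]
  exact mul_le_mul_of_nonneg_right (le_neg_of_le_neg (hA' y hy)) (hw_nonneg y hy)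

theorem integral_comp_deriv_sub_eq_intervalIntegral {φ f g : ℝ → ℝ} (hab : a ≤ b)
    (hfg : ∀ y ∉ Ioo a b, f y = g y) :
    ∫ y, (φ (deriv f y) - φ (deriv g y)) = ∫ y in a..b, (φ (deriv f y) - φ (deriv g y)) := by
  rw [integral_of_le hab, ← integral_Icc_eq_integral_Ioc]
  refine (setIntegral_eq_integral_of_forall_compl_eq_zero fun y hy ↦ ?_).symm
  have hderiv : deriv f y = deriv g y :=
    EqOn.deriv (fun z (hz : z ∈ (Icc a b)ᶜ) ↦ hfg z fun h ↦ hz (Ioo_subset_Icc_self h))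
      isClosed_Icc.isOpen_compl hy
  rw [hderiv, sub_self]

end IntervalIntegral

section EntropyGap

variable {a b c : ℝ} {f p : ℝ → ℝ}

theorem mul_integral_sub_le_integral_Hber_sub_of_abs_deriv_lt_one (hab : a ≤ b) (hc : 0 ≤ c)
    (hf : AbsolutelyContinuousOnInterval f a b) (hf' : ∀ y ∈ Icc a b, |deriv f y| ≤ 1)
    (hp : ContDiff ℝ 2 p) (hp' : ∀ y ∈ Icc a b, |deriv p y| < 1)
    (hp'' : ∀ y ∈ Icc a b, deriv (deriv p) y ≤ -c) (hpf : ∀ y ∈ Icc a b, p y ≤ f y)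
    (ha : f a = p a) (hb : f b = p b) :
    c * ∫ y in a..b, (f y - p y) ≤ ∫ y in a..b, (Hber (deriv f y) - Hber (deriv p y)) := by
  have hIcc : [[a, b]] = Icc a b := uIcc_of_le hab
  have hIoc : Ι a b ⊆ Icc a b := uIoc_of_le hab ▸ Ioc_subset_Icc_self
  have hdp : ContDiff ℝ 1 (deriv p) := hp.deriv'
  have hA : AbsolutelyContinuousOnInterval (fun y ↦ Real.artanh (deriv p y)) a b := by
    refine (contDiffOn_artanh.comp hdp.contDiffOn fun y hy ↦ ?_).absolutelyContinuousOnInterval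
    exact abs_lt.1 (hp' y (hIcc ▸ hy))
  have hpAC : AbsolutelyContinuousOnInterval p a b :=
    (hp.of_le one_le_two).contDiffOn.absolutelyContinuousOnInterval
  have hA' (y : ℝ) (hy : y ∈ Icc a b) : deriv (fun y ↦ Real.artanh (deriv p y)) y ≤ -c := by
    have hu : deriv p y ∈ Ioo (-1) 1 := abs_lt.1 (hp' y hy)
    have hsq : 0 < 1 - deriv p y ^ 2 := by nlinarith [hu.1, hu.2]
    have hd := (hasDerivAt_artanh hu).comp y (hdp.differentiable one_ne_zero y).hasDerivAt
    rw [show deriv (fun y ↦ Real.artanh (deriv p y)) y = _ from hd.deriv, inv_mul_le_iff₀ hsq]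
    nlinarith [hp'' y hy, sq_nonneg (deriv p y)]
  calc c * ∫ y in a..b, (f y - p y)
      ≤ ∫ y in a..b, Real.artanh (deriv p y) * deriv (fun y ↦ f y - p y) y :=
        mul_integral_le_integral_mul_deriv hab hA (hf.sub hpAC)
          (fun y hy ↦ hA' y (Ioo_subset_Icc_self hy))
          (fun y hy ↦ sub_nonneg.2 (hpf y (Ioo_subset_Icc_self hy)))
          (sub_eq_zero.2 ha) (sub_eq_zero.2 hb)
    _ ≤ ∫ y in a..b, (Hber (deriv f y) - Hber (deriv p y)) := by
        refine integral_mono_ae_restrict hab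
          ((hf.sub hpAC).intervalIntegrable_deriv.continuousOn_mul hA.continuousOn)
          ((intervalIntegrable_comp_of_bounded continuous_Hber (measurable_deriv f)
            fun y hy ↦ hf' y (hIoc hy)).sub
            ((continuous_Hber.comp hdp.continuous).intervalIntegrable _ _)) ?_
        rw [Filter.EventuallyLE, ae_restrict_iff' measurableSet_Icc]
        filter_upwards [hf.ae_differentiableAt] with y hfd hy
        have hu : deriv p y ∈ Ioo (-1) 1 := abs_lt.1 (hp' y hy)
        rw [deriv_fun_sub (hfd (hIcc ▸ hy)) (hp.differentiable two_ne_zero y), le_sub_iff_add_le']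
        exact add_mul_sub_le_of_convexOn convexOn_Hber (Ioo_subset_Icc_self hu)
          (abs_le.1 (hf' y hy)) (hasDerivAt_Hber hu)

theorem sq_mul_integral_sub_le_integral_Hber_mul_sub {r : ℝ} (hr : r ∈ Ioo 0 1)
    (hab : a ≤ b) (hc : 0 ≤ c)
    (hf : AbsolutelyContinuousOnInterval f a b) (hf' : ∀ y ∈ Icc a b, |deriv f y| ≤ 1)
    (hp : ContDiff ℝ 2 p) (hp' : ∀ y ∈ Icc a b, |deriv p y| ≤ 1)
    (hp'' : ∀ y ∈ Icc a b, deriv (deriv p) y ≤ -c) (hpf : ∀ y ∈ Icc a b, p y ≤ f y)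
    (ha : f a = p a) (hb : f b = p b) :
    r ^ 2 * (c * ∫ y in a..b, (f y - p y)) ≤
      ∫ y in a..b, (Hber (r * deriv f y) - Hber (r * deriv p y)) := by
  have deriv_mul (g : ℝ → ℝ) : deriv (fun y ↦ r * g y) = fun y ↦ r * deriv g y :=
    funext fun _ ↦ deriv_const_mul_field r
  have abs_mul_le {x : ℝ} (hx : |x| ≤ 1) : |r * x| ≤ r := by
    rw [abs_mul, abs_of_pos hr.1]
    exact mul_le_of_le_one_right hr.1.le hx
  have h := mul_integral_sub_le_integral_Hber_sub_of_abs_deriv_lt_one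
    (f := fun y ↦ r * f y) (p := fun y ↦ r * p y) (c := r * c) hab (mul_nonneg hr.1.le hc)
    (hf.const_mul r) (fun y hy ↦ deriv_mul f ▸ (abs_mul_le (hf' y hy)).trans hr.2.le)
    (contDiff_const.mul hp) (fun y hy ↦ deriv_mul p ▸ (abs_mul_le (hp' y hy)).trans_lt hr.2)
    (fun y hy ↦ by
      simpa only [deriv_mul, mul_neg] using mul_le_mul_of_nonneg_left (hp'' y hy) hr.1.le)
    (fun y hy ↦ mul_le_mul_of_nonneg_left (hpf y hy) hr.1.le)
    (congrArg (r * ·) ha) (congrArg (r * ·) hb)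
  simp only [deriv_mul, ← mul_sub, intervalIntegral.integral_const_mul] at h
  linear_combination h

theorem mul_integral_sub_le_integral_Hber_sub (hab : a ≤ b) (hc : 0 ≤ c)
    (hf : AbsolutelyContinuousOnInterval f a b) (hf' : ∀ y ∈ Icc a b, |deriv f y| ≤ 1)
    (hp : ContDiff ℝ 2 p) (hp' : ∀ y ∈ Icc a b, |deriv p y| ≤ 1)
    (hp'' : ∀ y ∈ Icc a b, deriv (deriv p) y ≤ -c) (hpf : ∀ y ∈ Icc a b, p y ≤ f y)
    (ha : f a = p a) (hb : f b = p b) :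
    c * ∫ y in a..b, (f y - p y) ≤ ∫ y in a..b, (Hber (deriv f y) - Hber (deriv p y)) := by
  have hIoc : Ι a b ⊆ Icc a b := uIoc_of_le hab ▸ Ioc_subset_Icc_self
  have integrable {g : ℝ → ℝ} (hg : ∀ y ∈ Icc a b, |deriv g y| ≤ 1) (r : ℝ) :
      IntervalIntegrable (fun y ↦ Hber (r * deriv g y)) volume a b :=
    intervalIntegrable_comp_of_bounded (φ := fun u ↦ Hber (r * u))
      (continuous_Hber.comp (continuous_const_mul r)) (measurable_deriv g)
      fun y hy ↦ hg y (hIoc hy)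
  have continuous_integral :
      Continuous fun r ↦ ∫ y in a..b, (Hber (r * deriv f y) - Hber (r * deriv p y)) := by
    simp only [intervalIntegral.integral_sub (integrable hf' _) (integrable hp' _)]
    exact
      (continuous_intervalIntegral_comp_mul continuous_Hber (measurable_deriv f)
        fun y hy ↦ hf' y (hIoc hy)).sub
      (continuous_intervalIntegral_comp_mul continuous_Hber (measurable_deriv p)
        fun y hy ↦ hp' y (hIoc hy))
  have one_mem : (1 : ℝ) ∈ closure (Ioo 0 1) := by
    rw [closure_Ioo zero_ne_one]
    exact right_mem_Icc.2 zero_le_one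
  have limit := ContinuousWithinAt.closure_le one_mem (by fun_prop)
    continuous_integral.continuousWithinAt fun r hr ↦
      sq_mul_integral_sub_le_integral_Hber_mul_sub hr hab hc hf hf' hp hp' hp'' hpf ha hb
  simpa only [one_pow, one_mul] using limit

end EntropyGap

section Parabola

variable {xh ah t y : ℝ}

/-- The quadratic polynomial that `parabXA xh ah t` follows on `[xh - t, xh + t]`; unlike
`parabXA xh ah t` it is smooth on all of `ℝ`. -/
noncomputable def parabArc (xh ah t y : ℝ) : ℝ :=
  ah - t / 2 - (y - xh) ^ 2 / (2 * t)

theorem contDiff_parabArc {n : WithTop ℕ∞} : ContDiff ℝ n (parabArc xh ah t) := by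
  unfold parabArc
  fun_prop

theorem deriv_parabArc : deriv (parabArc xh ah t) = fun y ↦ (xh - y) / t := by
  funext y
  have h := ((((hasDerivAt_id y).sub_const xh).pow 2).div_const (2 * t)).const_sub (ah - t / 2)
  refine (h.congr_deriv ?_ : HasDerivAt (parabArc xh ah t) _ y).deriv
  simp
  ring

theorem deriv_deriv_parabArc : deriv (deriv (parabArc xh ah t)) y = -t⁻¹ := by
  rw [deriv_parabArc]
  have h := ((hasDerivAt_id y).const_sub xh).div_const t
  rw [neg_div, one_div] at h
  exact h.deriv

theorem parabXA_eqOn_parabArc (ht : 0 < t) :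
    EqOn (parabXA xh ah t) (parabArc xh ah t) (Icc (xh - t) (xh + t)) := by
  intro y hy
  have hyt : |y - xh| ≤ t := abs_le.2 ⟨by linarith [hy.1], by linarith [hy.2]⟩
  rw [parabXA, parab, if_pos ⟨ht, hyt⟩, parabArc]
  ring

theorem continuousOn_parabXA (ht : 0 < t) :
    ContinuousOn (parabXA xh ah t) (Icc (xh - t) (xh + t)) :=
  (contDiff_parabArc (n := 0)).continuous.continuousOn.congr (parabXA_eqOn_parabArc ht)

theorem parab_eq_neg_abs {x : ℝ} (hx : t ≤ |x|) : parab t x = -|x| := by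
  rw [parab]
  split_ifs with h
  · rw [← sq_abs, le_antisymm h.2 hx]
    field_simp [h.1.ne']
    ring
  · rfl

theorem parabXA_eq_parabXA_zero (hy : t ≤ |y - xh|) : parabXA xh ah t y = parabXA xh ah 0 y := by
  rw [parabXA, parabXA, parab_eq_neg_abs hy, parab_eq_neg_abs (abs_nonneg _)]

end Parabola

section ExcessEntropy

variable {xh ah t : ℝ} {f : ℝ → ℝ}

theorem eq_parabXA_of_notMem_Ioo
    (hbound : ∀ y, parabXA xh ah t y ≤ f y ∧ f y ≤ parabXA xh ah 0 y) :
    ∀ y ∉ Ioo (xh - t) (xh + t), f y = parabXA xh ah t y := by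
  intro y hy
  have hyt : t ≤ |y - xh| := by
    by_contra! h
    exact hy ⟨by linarith [(abs_lt.1 h).1], by linarith [(abs_lt.1 h).2]⟩
  exact le_antisymm ((hbound y).2.trans_eq (parabXA_eq_parabXA_zero hyt).symm) (hbound y).1

theorem excessEntropy_eq_intervalIntegral (ht : 0 < t)
    (hf : ∀ y ∉ Ioo (xh - t) (xh + t), f y = parabXA xh ah t y) :
    excessEntropy xh ah t f =
      ∫ y in (xh - t)..(xh + t), (Hber (deriv f y) - Hber (deriv (parabArc xh ah t) y)) := by
  have hab : xh - t ≤ xh + t := by linarith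
  rw [excessEntropy, integral_comp_deriv_sub_eq_intervalIntegral hab hf]
  refine integral_congr_Ioo_of_le hab fun y hy ↦ ?_
  have hderiv : deriv (parabXA xh ah t) y = deriv (parabArc xh ah t) y :=
    ((parabXA_eqOn_parabArc ht).mono Ioo_subset_Icc_self).deriv isOpen_Ioo hy
  simp only [hderiv]

theorem inv_mul_integral_sub_parabXA_le_excessEntropy (ht : 0 < t) (hf : LipschitzWith 1 f)
    (hbound : ∀ y, parabXA xh ah t y ≤ f y ∧ f y ≤ parabXA xh ah 0 y) :
    t⁻¹ * ∫ y in (xh - t)..(xh + t), (f y - parabXA xh ah t y) ≤ excessEntropy xh ah t f := by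
  have hab : xh - t ≤ xh + t := by linarith
  have hout := eq_parabXA_of_notMem_Ioo hbound
  have harc : EqOn (parabXA xh ah t) (parabArc xh ah t) (Icc (xh - t) (xh + t)) :=
    parabXA_eqOn_parabArc ht
  rw [excessEntropy_eq_intervalIntegral ht hout,
    integral_congr (g := fun y ↦ f y - parabArc xh ah t y)
      fun y hy ↦ congrArg (f y - ·) (harc (uIcc_of_le hab ▸ hy))]
  refine mul_integral_sub_le_integral_Hber_sub hab (inv_nonneg.2 ht.le)
    hf.lipschitzOnWith.absolutelyContinuousOnInterval
    (fun y _ ↦ by simpa using norm_deriv_le_of_lipschitz (x₀ := y) hf)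
    contDiff_parabArc (fun y hy ↦ ?_) (fun y _ ↦ deriv_deriv_parabArc.le)
    (fun y hy ↦ harc hy ▸ (hbound y).1)
    ((hout _ left_notMem_Ioo).trans (harc (left_mem_Icc.2 hab)))
    ((hout _ right_notMem_Ioo).trans (harc (right_mem_Icc.2 hab)))
  rw [deriv_parabArc, abs_div, abs_of_pos ht, div_le_one ht, abs_le]
  exact ⟨by linarith [hy.2], by linarith [hy.1]⟩

end ExcessEntropy

/-- Nonnegativity of the excess entropy, with equality exactly at the parabola itself. -/
theorem excessEntropy_nonneg_and_eq_zero_iff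
    (t : ℝ) (ht : 0 < t) (xh ah : ℝ) (f : ℝ → ℝ) (hf : LipschitzWith 1 f)
    (hbound : ∀ y, parabXA xh ah t y ≤ f y ∧ f y ≤ parabXA xh ah 0 y) :
    0 ≤ excessEntropy xh ah t f ∧
      (excessEntropy xh ah t f = 0 ↔ ∀ y, f y = parabXA xh ah t y) := by
  have hab : xh - t < xh + t := by linarith
  have gap_nonneg (y : ℝ) : 0 ≤ f y - parabXA xh ah t y := sub_nonneg.2 (hbound y).1
  have gap_le := inv_mul_integral_sub_parabXA_le_excessEntropy ht hf hbound
  have gap_integral_nonneg : 0 ≤ ∫ y in (xh - t)..(xh + t), (f y - parabXA xh ah t y) :=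
    integral_nonneg hab.le fun y _ ↦ gap_nonneg y
  refine ⟨(mul_nonneg (inv_nonneg.2 ht.le) gap_integral_nonneg).trans gap_le, fun hzero y ↦ ?_,
    fun heq ↦ by simp [excessEntropy, show f = parabXA xh ah t from funext heq]⟩
  by_contra hne
  have hy : y ∈ Ioo (xh - t) (xh + t) :=
    by_contra fun hy ↦ hne (eq_parabXA_of_notMem_Ioo hbound y hy)
  have gap_integral_pos : 0 < ∫ y in (xh - t)..(xh + t), (f y - parabXA xh ah t y) :=
    integral_pos hab (hf.continuous.continuousOn.sub (continuousOn_parabXA ht))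
      (fun z _ ↦ gap_nonneg z)
      ⟨y, Ioo_subset_Icc_self hy, (gap_nonneg y).lt_of_ne' (sub_ne_zero.2 hne)⟩
  exact (mul_pos (inv_pos.2 ht) gap_integral_pos).not_ge (gap_le.trans_eq hzero)
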